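/- Let M be a compact metric space, μ a finite Borel measure on M, and B = (ℕ → M) with the product topology. For continuous ψ, β, φ : B → ℝ, one has the second-order Taylor estimate in the supremum norm: ‖L_{ψ+β}φ − L_ψ(φ·(1 + β + β²/2))‖_∞ ≤ μ(M) · e^{‖ψ‖_∞} · (e^{‖β‖_∞} − 1 − ‖β‖_∞ − ‖β‖_∞²/2) · ‖φ‖_∞. -/

import Mathlib

open MeasureTheory

/-- The sequence `ax = (a, x 0, x 1, …)`. -/
def seqCons {M : Type*} (a : M) (x : ℕ → M) : ℕ → M
  | 0 => a
  | n + 1 => x n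

lemma exp_taylor_two_aux {t b : ℝ} (h : |t| ≤ b) :
    |Real.exp t - (1 + t + t ^ 2 / 2)| ≤ Real.exp b - 1 - b - b ^ 2 / 2 := by
  have hs : ∀ u : ℝ, HasSum (fun n : ℕ => u ^ (n + 3) / (n + 3).factorial)
      (Real.exp u - (1 + u + u ^ 2 / 2)) := by
    intro u
    have h1 : HasSum (fun n : ℕ => u ^ n / n.factorial) (Real.exp u) := by
      rw [Real.exp_eq_exp_ℝ]
      exact NormedSpace.expSeries_div_hasSum_exp u
    have h2 := (hasSum_nat_add_iff' 3).mpr h1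
    simpa [Finset.sum_range_succ, Nat.factorial] using h2
  have h3 := tsum_of_norm_bounded (hs b) (f := fun n : ℕ => t ^ (n + 3) / (n + 3).factorial) (by
    intro n
    rw [norm_div, norm_pow, Real.norm_eq_abs, Real.norm_natCast]
    gcongr)
  rw [(hs t).tsum_eq, Real.norm_eq_abs] at h3
  linarith

lemma continuous_seqCons_aux {M : Type*} [TopologicalSpace M] (x : ℕ → M) :
    Continuous (fun a : M => seqCons a x) := by
  refine continuous_pi fun n => ?_
  cases n with
  | zero => exact continuous_id
  | succ n => exact continuous_const

/-- Second-order Taylor estimate for the Ruelle operator in the sup norm: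
`‖L_{ψ+β}φ − L_ψ(φ·(1+β+β²/2))‖_∞ ≤ μ(M) e^{‖ψ‖_∞} (e^{‖β‖_∞} − 1 − ‖β‖_∞ − ‖β‖_∞²/2) ‖φ‖_∞`. -/
theorem ruelle_operator_second_order_taylor
    {M : Type*} [MetricSpace M] [CompactSpace M] [MeasurableSpace M] [BorelSpace M]
    (μ : Measure M) [IsFiniteMeasure μ]
    (ψ β φ : C(ℕ → M, ℝ)) :
    ∀ x : ℕ → M,
      |(∫ a, Real.exp (ψ (seqCons a x) + β (seqCons a x)) * φ (seqCons a x) ∂μ) -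
        (∫ a, Real.exp (ψ (seqCons a x)) * φ (seqCons a x) *
          (1 + β (seqCons a x) + β (seqCons a x) ^ 2 / 2) ∂μ)| ≤
      (μ Set.univ).toReal * Real.exp ‖ψ‖ *
        (Real.exp ‖β‖ - 1 - ‖β‖ - ‖β‖ ^ 2 / 2) * ‖φ‖ := by
  intro x
  have hc := continuous_seqCons_aux x
  have hψ : Continuous fun a => ψ (seqCons a x) := ψ.continuous.comp hc
  have hβ : Continuous fun a => β (seqCons a x) := β.continuous.comp hc
  have hφ : Continuous fun a => φ (seqCons a x) := φ.continuous.comp hc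
  have hint : ∀ f : M → ℝ, Continuous f → Integrable f μ := fun f hf =>
    hf.integrable_of_hasCompactSupport (HasCompactSupport.of_compactSpace f)
  rw [← integral_sub (hint _ (by fun_prop)) (hint _ (by fun_prop)), ← Real.norm_eq_abs]
  refine (norm_integral_le_of_norm_le_const (C := Real.exp ‖ψ‖ *
        (Real.exp ‖β‖ - 1 - ‖β‖ - ‖β‖ ^ 2 / 2) * ‖φ‖) (Filter.Eventually.of_forall fun a => ?_)).trans
    (le_of_eq ?_)
  · have e : Real.exp (ψ (seqCons a x) + β (seqCons a x)) * φ (seqCons a x) -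
        Real.exp (ψ (seqCons a x)) * φ (seqCons a x) *
          (1 + β (seqCons a x) + β (seqCons a x) ^ 2 / 2) =
        Real.exp (ψ (seqCons a x)) * (Real.exp (β (seqCons a x)) -
          (1 + β (seqCons a x) + β (seqCons a x) ^ 2 / 2)) * φ (seqCons a x) := by
      rw [Real.exp_add]; ring
    have h1 := exp_taylor_two_aux (β.norm_coe_le_norm (seqCons a x))
    have h2 : Real.exp (ψ (seqCons a x)) ≤ Real.exp ‖ψ‖ :=
      Real.exp_le_exp.mpr ((le_abs_self _).trans (ψ.norm_coe_le_norm (seqCons a x)))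
    have h3 : |φ (seqCons a x)| ≤ ‖φ‖ := φ.norm_coe_le_norm (seqCons a x)
    have h4 := (abs_nonneg _).trans h1
    rw [e, Real.norm_eq_abs, abs_mul, abs_mul, Real.abs_exp]
    gcongr
  · rw [Measure.real]; ring
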